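/- arXiv:2605.02632 — 2 statements merged into one kernel-verified Lean document; each statement's English description precedes it below -/
import Mathlib

section
/- Let r ≥ 5 be a prime and let z, s be nonzero integers satisfying v_r(z) = 1 and v_r(s) = (r+1)/2. Then for any root γ of F(x) = (−z)^((r−1)/2)·x·h(2 − x²/z) + s in an algebraic closure of ℚ_r, the extension ℚ_r(γ)/ℚ_r has degree r and is totally ramified (equivalently: [ℚ_r(γ) : ℚ_r] = r and the unique extension v_r of the r-adic valuation, normalized by v_r(r) = 1, satisfies 0 < v_r(γ) < 1, forcing ramification index r). -/
open Polynomial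

/-- `h` is the minimal polynomial (over `ℤ`) of `ζ_r + ζ_r⁻¹`, where `ζ_r = exp(2πi/r)`
is a primitive `r`-th root of unity. -/
noncomputable def hpoly (r : ℕ) : Polynomial ℤ :=
  minpoly ℤ (Complex.exp (2 * Real.pi * Complex.I / (r : ℂ)) +
    (Complex.exp (2 * Real.pi * Complex.I / (r : ℂ)))⁻¹)

/-- The polynomial `F(x) = (-z)^((r-1)/2) · x · h(2 - x²/z) + s`, over a field `K`. -/
noncomputable def Fpoly (r : ℕ) (z s : ℤ) (K : Type*) [Field K] : Polynomial K :=
  C ((((-z) ^ ((r - 1) / 2) : ℤ) : K)) * X *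
    (((hpoly r).map (Int.castRingHom K)).comp (C 2 - C ((z : K))⁻¹ * X ^ 2)) + C ((s : K))

/-- `v` is (the additive form of) the unique extension to the algebraic closure of `ℚ_q` of
the `q`-adic valuation, normalized so that `v q = 1`. -/
def IsValuationExt (q : ℕ) [Fact q.Prime] (v : AlgebraicClosure ℚ_[q] → ℚ) : Prop :=
  (∀ x y : AlgebraicClosure ℚ_[q], x ≠ 0 → y ≠ 0 → v (x * y) = v x + v y) ∧
  (∀ x y : AlgebraicClosure ℚ_[q], x ≠ 0 → y ≠ 0 → x + y ≠ 0 →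
    min (v x) (v y) ≤ v (x + y)) ∧
  (∀ x : ℚ_[q], x ≠ 0 →
    v (algebraMap ℚ_[q] (AlgebraicClosure ℚ_[q]) x) = (x.valuation : ℚ))

/-!
The polynomial `F` is `D_r(X, z) + s` with `D_r` the Dickson polynomial of the first kind. Indeed
`h` is the `n`-th rescaled Chebyshev polynomial `Wₙ` of the fourth kind, `r = 2n + 1`: the latter
vanishes at `ζ + ζ⁻¹`, and `Wₙ(X + 2)` is Eisenstein at `r`, because `D_r(X, 1) ≡ X ^ r` modulo `r`
and `Wₙ(2 - X²)` is `D_r(X, 1) / X` up to sign. With `b² = z`, homogeneity gives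
`D_r(b X, b²) = b ^ r D_r(X, 1)`. The middle coefficients of `D_r(X, 1) + s / b ^ r` are divisible
by `r`, so its Newton polygon is a single segment, whence every root `γ` of `F` satisfies
`r v(γ) = v(s)`. The constant coefficient of the minimal polynomial of `γ`, of degree `d`, then has
valuation `d v(s) / r`, an integer; since `r` does not divide `v(s)`, it divides `d`.
-/

section Valuation

variable {Γ₀ : Type*} [LinearOrderedCommGroupWithZero Γ₀]

lemma pow_mul_pow_lt_max_pow {a b : Γ₀} (hab : a ≠ b) {i j : ℕ} (hi : i ≠ 0) (hj : j ≠ 0) :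
    a ^ i * b ^ j < max a b ^ (i + j) := by
  rw [pow_add]
  rcases hab.lt_or_gt with h | h
  · have hb : 0 < b := zero_le.trans_lt h
    rw [max_eq_right h.le]
    exact mul_lt_mul_of_pos_right (pow_lt_pow_left₀ h zero_le hi) (pow_pos hb j)
  · have ha : 0 < a := zero_le.trans_lt h
    rw [max_eq_left h.le]
    exact mul_lt_mul_of_pos_left (pow_lt_pow_left₀ h zero_le hj) (pow_pos ha i)

lemma valuation_intCast_le_one {R : Type*} [Ring R] (v : Valuation R Γ₀) (m : ℤ) :
    v (m : R) ≤ 1 :=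
  v.mem_integer_iff _ |>.mp (intCast_mem v.integer m)

lemma valuation_intCast_le_of_dvd {R : Type*} [Ring R] (v : Valuation R Γ₀) {m n : ℤ}
    (h : m ∣ n) : v (n : R) ≤ v (m : R) := by
  obtain ⟨k, rfl⟩ := h
  rw [Int.cast_mul, map_mul]
  exact mul_le_of_le_one_right' (valuation_intCast_le_one v k)

/- In additive notation the hypothesis says that the Newton polygon of `p` has no vertex strictly
below the segment joining its two end points. -/
theorem valuation_root_pow_natDegree_eq {R : Type*} [CommRing R] (v : Valuation R Γ₀) {p : R[X]}
    (hp : p.Monic)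
    (hcoeff : ∀ i, 0 < i → i < p.natDegree →
      v (p.coeff i) ^ p.natDegree ≤ v (p.coeff 0) ^ (p.natDegree - i))
    {x : R} (hx : p.IsRoot x) :
    v x ^ p.natDegree = v (p.coeff 0) := by
  rcases Nat.eq_zero_or_pos p.natDegree with hn | hn
  · simp [hp.natDegree_eq_zero.mp hn]
  by_contra hne
  have hmiddle : v (∑ i ∈ Finset.Ioo 0 p.natDegree, p.coeff i * x ^ i) <
      max (v (p.coeff 0)) (v (x ^ p.natDegree)) := by
    rw [map_pow]
    refine v.map_sum_lt' ?_ fun i hi => ?_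
    · rcases Ne.lt_or_gt hne with h | h
      · exact lt_max_of_lt_left (zero_le.trans_lt h)
      · exact lt_max_of_lt_right (zero_le.trans_lt h)
    · obtain ⟨hi0, hin⟩ := Finset.mem_Ioo.mp hi
      refine lt_of_pow_lt_pow_left₀ p.natDegree zero_le ?_
      calc v (p.coeff i * x ^ i) ^ p.natDegree
          = v (p.coeff i) ^ p.natDegree * (v x ^ p.natDegree) ^ i := by
            rw [map_mul, map_pow, mul_pow, pow_right_comm]
        _ ≤ v (p.coeff 0) ^ (p.natDegree - i) * (v x ^ p.natDegree) ^ i :=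
            mul_le_mul_left (hcoeff i hi0 hin) _
        _ < max (v (p.coeff 0)) (v x ^ p.natDegree) ^ (p.natDegree - i + i) :=
            pow_mul_pow_lt_max_pow (Ne.symm hne) (Nat.sub_ne_zero_of_lt hin) hi0.ne'
        _ = _ := by rw [Nat.sub_add_cancel hin.le]
  have hends : p.coeff 0 + x ^ p.natDegree =
      -∑ i ∈ Finset.Ioo 0 p.natDegree, p.coeff i * x ^ i := by
    have heval : p.eval x = 0 := hx
    rw [eval_eq_sum_range, Finset.sum_range_succ, hp.coeff_natDegree, Finset.range_eq_Ico,
      ← Finset.Ioo_insert_left hn, Finset.sum_insert Finset.left_notMem_Ioo] at heval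
    linear_combination heval
  rw [← v.map_neg, ← hends, v.map_add_of_distinct_val (by rw [map_pow]; exact Ne.symm hne)]
    at hmiddle
  exact hmiddle.false

lemma valuation_coeff_zero_pow_of_splits {L : Type*} [Field L] (v : Valuation L Γ₀) {p : L[X]}
    (hp : p.Monic) (hsplits : p.Splits) {c : Γ₀} {n : ℕ} (hroots : ∀ y, p.IsRoot y → v y ^ n = c) :
    v (p.coeff 0) ^ n = c ^ p.natDegree := by
  have hconst : ∀ y ∈ p.roots, v y ^ n = c := fun y hy => hroots y (isRoot_of_mem_roots hy)
  rw [hsplits.coeff_zero_eq_prod_roots_of_monic hp, map_mul, map_pow, v.map_neg, map_one, one_pow,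
    one_mul, map_multiset_prod, ← Multiset.prod_map_pow, Multiset.map_congr rfl hconst,
    Multiset.map_const', Multiset.prod_replicate, ← hsplits.natDegree_eq_card_roots]

theorem natDegree_minpoly_eq_of_valuation_roots {K L : Type*} [Field K] [Field L] [Algebra K L]
    (vK : Valuation K (WithZero (Multiplicative ℤ))) (vL : Valuation L Γ₀) [vK.HasExtension vL]
    {p : K[X]} {n : ℕ} (hn : p.natDegree = n) (hp : p ≠ 0)
    (hsplits : (p.map (algebraMap K L)).Splits) {c : K}
    (hc : IsCoprime (n : ℤ) (WithZero.log (vK c)))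
    (hroots : ∀ y : L, aeval y p = 0 → vL y ^ n = vL (algebraMap K L c))
    {x : L} (hx : aeval x p = 0) :
    (minpoly K x).natDegree = n := by
  have hint : IsIntegral K x := (show IsAlgebraic K x from ⟨p, hp, hx⟩).isIntegral
  have hmonic := minpoly.monic hint
  have hdvd : minpoly K x ∣ p := minpoly.dvd K x hx
  have hvL := valuation_coeff_zero_pow_of_splits vL (hmonic.map (algebraMap K L))
    (hsplits.of_dvd (map_ne_zero hp) (Polynomial.map_dvd _ hdvd)) fun y hy =>
      hroots y <| aeval_eq_zero_of_dvd_aeval_eq_zero hdvd <| by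
        rwa [IsRoot, eval_map_algebraMap] at hy
  have hvK : vK ((minpoly K x).coeff 0) ^ n = vK c ^ (minpoly K x).natDegree := by
    rwa [coeff_map, natDegree_map, ← map_pow, ← map_pow, ← map_pow, ← map_pow,
      Valuation.HasExtension.val_map_eq_iff vK vL, map_pow, map_pow] at hvL
  have hlog := congrArg WithZero.log hvK
  simp only [WithZero.log_pow, nsmul_eq_mul] at hlog
  have hdvd_degree : n ∣ (minpoly K x).natDegree :=
    Int.natCast_dvd_natCast.mp (hc.dvd_of_dvd_mul_right ⟨_, hlog.symm⟩)
  exact (hn ▸ natDegree_le_of_dvd hdvd hp).antisymm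
    (Nat.le_of_dvd (minpoly.natDegree_pos hint) hdvd_degree)

end Valuation

lemma comp_injective_of_natDegree_ne_zero {R : Type*} [CommRing R] [NoZeroDivisors R] {q : R[X]}
    (hq : q.natDegree ≠ 0) :
    Function.Injective fun p : R[X] => p.comp q := by
  intro p₁ p₂ h
  rw [← sub_eq_zero, ← sub_comp, comp_eq_zero_iff] at h
  rcases h with h | ⟨-, h⟩
  · exact sub_eq_zero.mp h
  · exact absurd (h ▸ natDegree_C _) hq

lemma natCast_dvd_coeff_of_map_eq_X_pow {p : ℤ[X]} {m n : ℕ}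
    (h : p.map (Int.castRingHom (ZMod m)) = X ^ n) {i : ℕ} (hi : i ≠ n) :
    (m : ℤ) ∣ p.coeff i := by
  rw [← ZMod.intCast_zmod_eq_zero_iff_dvd, ← eq_intCast (Int.castRingHom (ZMod m)), ← coeff_map, h,
    coeff_X_pow, if_neg hi]

section Dickson

variable {R : Type*} [CommRing R]

lemma natDegree_dickson_le (k : ℕ) (a : R) (n : ℕ) : (dickson k a n).natDegree ≤ n := by
  induction n using Nat.twoStepInduction with
  | zero =>
    rw [dickson_zero]
    compute_degree
  | one => exact natDegree_X_le
  | more n ih₀ ih₁ =>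
    rw [dickson_add_two]
    compute_degree
    omega

lemma coeff_dickson_self (k : ℕ) (a : R) {n : ℕ} (hn : n ≠ 0) : (dickson k a n).coeff n = 1 := by
  obtain ⟨m, rfl⟩ := Nat.exists_eq_succ_of_ne_zero hn
  clear hn
  induction m with
  | zero => simp
  | succ m ih =>
    have hm : (dickson k a m).coeff (m + 2) = 0 :=
      coeff_eq_zero_of_natDegree_lt ((natDegree_dickson_le k a m).trans_lt (by omega))
    simpa [hm] using ih

lemma monic_dickson (k : ℕ) (a : R) {n : ℕ} (hn : n ≠ 0) : (dickson k a n).Monic :=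
  monic_of_natDegree_le_of_coeff_eq_one n (natDegree_dickson_le k a n) (coeff_dickson_self k a hn)

lemma natDegree_dickson [Nontrivial R] (k : ℕ) (a : R) {n : ℕ} (hn : n ≠ 0) :
    (dickson k a n).natDegree = n :=
  natDegree_eq_of_le_of_coeff_ne_zero (natDegree_dickson_le k a n)
    (by rw [coeff_dickson_self k a hn]; exact one_ne_zero)

lemma dickson_add_four (k : ℕ) (a : R) (n : ℕ) :
    dickson k a (n + 4) = (X ^ 2 - 2 * C a) * dickson k a (n + 2) - C a ^ 2 * dickson k a n := by
  rw [dickson_add_two k a (n + 2), dickson_add_two k a (n + 1), dickson_add_two k a n]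
  ring

lemma coeff_zero_dickson_of_odd (k : ℕ) (a : R) {n : ℕ} (hn : Odd n) :
    (dickson k a n).coeff 0 = 0 := by
  obtain ⟨m, rfl⟩ := hn
  induction m with
  | zero => simp
  | succ m ih => simp [show 2 * (m + 1) + 1 = 2 * m + 1 + 2 by ring, ih]

lemma eval_mul_dickson_sq_mul (k : ℕ) (a b x : R) (n : ℕ) :
    (dickson k (b ^ 2 * a) n).eval (b * x) = b ^ n * (dickson k a n).eval x := by
  induction n using Nat.twoStepInduction with
  | zero => simp
  | one => simp
  | more n ih₀ ih₁ =>
    simp only [dickson_add_two, eval_sub, eval_mul, eval_X, eval_C, ih₀, ih₁]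
    ring

lemma prime_dvd_coeff_dickson (p : ℕ) [Fact p.Prime] {i : ℕ} (hi : i ≠ p) :
    (p : ℤ) ∣ (dickson 1 (1 : ℤ) p).coeff i :=
  natCast_dvd_coeff_of_map_eq_X_pow (by rw [map_dickson, map_one, dickson_one_one_zmod_p]) hi

end Dickson

section ChebyshevW

variable (R : Type*) [CommRing R]

/-- The Chebyshev polynomials of the fourth kind, rescaled to be monic: in the usual notation
`chebyshevW R n` is `Wₙ(X / 2)`, so that `Wₙ(2 cos θ) = sin ((n + 1/2) θ) / sin (θ / 2)`. -/
noncomputable def chebyshevW (n : ℕ) : R[X] :=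
  Chebyshev.S R n + Chebyshev.S R (n - 1)

namespace chebyshevW

lemma zero : chebyshevW R 0 = 1 := by simp [chebyshevW]

lemma one : chebyshevW R 1 = X + 1 := by simp [chebyshevW]

lemma add_two (n : ℕ) :
    chebyshevW R (n + 2) = X * chebyshevW R (n + 1) - chebyshevW R n := by
  have h := Chebyshev.S_add_two R (n - 1)
  rw [show (n : ℤ) - 1 + 2 = n + 1 by ring, sub_add_cancel] at h
  simp only [chebyshevW, Nat.cast_add, Nat.cast_ofNat, Nat.cast_one, Chebyshev.S_add_two,
    add_sub_cancel_right, show (n : ℤ) + 2 - 1 = n + 1 by ring]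
  linear_combination h

lemma map {S : Type*} [CommRing S] (f : R →+* S) (n : ℕ) :
    (chebyshevW R n).map f = chebyshevW S n := by
  simp [chebyshevW]

lemma eval_two (n : ℕ) : (chebyshevW R n).eval 2 = 2 * n + 1 := by
  simp only [chebyshevW, eval_add, Chebyshev.S_eval_two]
  push_cast
  ring

lemma monic (n : ℕ) : (chebyshevW R n).Monic := by
  cases n with
  | zero => rw [zero]; exact monic_one
  | succ n =>
    have hW : chebyshevW R (n + 1) = dickson 2 1 (n + 1) + dickson 2 1 n := by
      simp [chebyshevW, dickson_two_one_eq_chebyshev_S]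
    have hn := natDegree_dickson_le 2 (1 : R) n
    refine monic_of_natDegree_le_of_coeff_eq_one (n + 1) ?_ ?_
    · rw [hW]
      exact natDegree_add_le_of_degree_le (natDegree_dickson_le 2 1 (n + 1)) (hn.trans n.le_succ)
    · rw [hW, coeff_add, coeff_dickson_self 2 1 n.succ_ne_zero,
        coeff_eq_zero_of_natDegree_lt (hn.trans_lt n.lt_succ_self), add_zero]

end chebyshevW

variable {R}

lemma dickson_one_two_mul_add_one {a b : R} (h : a * b = 1) (n : ℕ) :
    dickson 1 a (2 * n + 1) =
      C ((-a) ^ n) * X * (chebyshevW R n).comp (C 2 - C b * X ^ 2) := by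
  have hC : (C a * C b : R[X]) = 1 := by rw [← C_mul, h, C_1]
  induction n using Nat.twoStepInduction with
  | zero => simp [chebyshevW.zero]
  | one =>
    simp only [chebyshevW.one, dickson_add_two, dickson_one, dickson_zero, add_comp, X_comp,
      one_comp, C_neg, pow_one, mul_one, zero_add, Nat.cast_one, C_ofNat]
    linear_combination (-X ^ 3) * hC
  | more n ih₀ ih₁ =>
    rw [show 2 * (n + 2) + 1 = 2 * n + 1 + 4 by ring, dickson_add_four, ih₀,
      show 2 * n + 1 + 2 = 2 * (n + 1) + 1 by ring, ih₁]
    simp only [chebyshevW.add_two, sub_comp, mul_comp, X_comp, C_neg, C_pow, C_ofNat]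
    linear_combination
      (X ^ 3 * C a * (-C a) ^ n * (chebyshevW R (n + 1)).comp (2 - C b * X ^ 2)) * hC

namespace chebyshevW

lemma sub_one_mul_pow_mul_eval {x y : R} (h : x * y = 1) (n : ℕ) :
    (x - 1) * x ^ n * (chebyshevW R n).eval (x + y) = x ^ (2 * n + 1) - 1 := by
  induction n using Nat.twoStepInduction with
  | zero => simp [zero]
  | one =>
    simp only [one, eval_add, eval_X, eval_one]
    linear_combination (x - 1) * h
  | more n ih₀ ih₁ =>
    simp only [add_two, eval_sub, eval_mul, eval_X]
    linear_combination (x ^ 2 + 1) * ih₁ - x ^ 2 * ih₀ +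
      (x - 1) * x ^ (n + 1) * (chebyshevW R (n + 1)).eval (x + y) * h

lemma taylor_two_zmod_eq_X_pow (n : ℕ) [Fact (2 * n + 1).Prime] :
    taylor 2 (chebyshevW (ZMod (2 * n + 1)) n) = X ^ n := by
  have hunit : (C ((-1) ^ n) * X : (ZMod (2 * n + 1))[X]) ≠ 0 :=
    mul_ne_zero (C_ne_zero.mpr (pow_ne_zero n (neg_ne_zero.mpr one_ne_zero))) X_ne_zero
  have hdeg : (-X ^ 2 : (ZMod (2 * n + 1))[X]).natDegree ≠ 0 := by simp
  refine comp_injective_of_natDegree_ne_zero hdeg (mul_left_cancel₀ hunit ?_)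
  calc C ((-1) ^ n) * X * (taylor 2 (chebyshevW (ZMod (2 * n + 1)) n)).comp (-X ^ 2)
      = dickson 1 1 (2 * n + 1) := by
        rw [dickson_one_two_mul_add_one (one_mul 1) n, taylor_apply, comp_assoc]
        simp only [add_comp, X_comp, C_comp, C_1, one_mul]
        ring_nf
    _ = X ^ (2 * n + 1) := dickson_one_one_zmod_p _
    _ = C ((-1) ^ n) * X * (X ^ n : (ZMod (2 * n + 1))[X]).comp (-X ^ 2) := by
        have hsign : ((-1) ^ n * (-1) ^ n : (ZMod (2 * n + 1))[X]) = 1 := by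
          rw [← mul_pow, neg_one_mul, neg_neg, one_pow]
        rw [X_pow_comp, neg_pow (X ^ 2 : (ZMod (2 * n + 1))[X]), C_pow, C_neg, C_1]
        linear_combination (-X ^ (2 * n + 1)) * hsign

lemma irreducible {n : ℕ} (hp : (2 * n + 1).Prime) : Irreducible (chebyshevW ℤ n) := by
  have := Fact.mk hp
  have hn : n ≠ 0 := by rintro rfl; exact Nat.not_prime_one hp
  have hmonic : (taylor 2 (chebyshevW ℤ n)).Monic := by
    rw [Monic, leadingCoeff_taylor, monic ℤ n]
  have hmap : (taylor 2 (chebyshevW ℤ n)).map (Int.castRingHom (ZMod (2 * n + 1))) = X ^ n := by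
    rw [map_taylor, map, eq_intCast, Int.cast_ofNat, taylor_two_zmod_eq_X_pow]
  have hdeg : (taylor 2 (chebyshevW ℤ n)).natDegree = n := by
    rw [← hmonic.natDegree_map (Int.castRingHom (ZMod (2 * n + 1))), hmap, natDegree_X_pow]
  have hprime : (Ideal.span {((2 * n + 1 : ℕ) : ℤ)}).IsPrime := by
    rw [Ideal.span_singleton_prime (by omega)]
    exact Nat.prime_iff_prime_int.mp hp
  rw [← MulEquiv.irreducible_iff (taylorEquiv (2 : ℤ))]
  have heisenstein : (taylor 2 (chebyshevW ℤ n)).IsEisensteinAt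
      (Ideal.span {((2 * n + 1 : ℕ) : ℤ)}) := by
    refine hmonic.isEisensteinAt_of_mem_of_notMem hprime.ne_top (fun hi => ?_) ?_
    · rw [hdeg] at hi
      exact Ideal.mem_span_singleton.mpr (natCast_dvd_coeff_of_map_eq_X_pow hmap hi.ne)
    · rw [taylor_coeff_zero, eval_two, Ideal.span_singleton_pow, Ideal.mem_span_singleton]
      have hle : ¬ (((2 * n + 1 : ℕ) : ℤ) ^ 2 ∣ ((2 * n + 1 : ℕ) : ℤ) ^ 1) := by
        rw [pow_dvd_pow_iff (by omega) (by rw [Int.isUnit_iff]; omega)]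
        omega
      simpa using hle
  exact heisenstein.irreducible hprime hmonic.isPrimitive (by omega)

end chebyshevW

lemma hpoly_eq_chebyshevW {n : ℕ} (hp : (2 * n + 1).Prime) :
    hpoly (2 * n + 1) = chebyshevW ℤ n := by
  have hζ := Complex.isPrimitiveRoot_exp (2 * n + 1) hp.ne_zero
  unfold hpoly
  set ζ := Complex.exp (2 * Real.pi * Complex.I / ((2 * n + 1 : ℕ) : ℂ))
  have hζ0 : ζ ≠ 0 := hζ.ne_zero hp.ne_zero
  have hroot : aeval (ζ + ζ⁻¹) (chebyshevW ℤ n) = 0 := by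
    have h := chebyshevW.sub_one_mul_pow_mul_eval (mul_inv_cancel₀ hζ0) n
    rw [hζ.pow_eq_one, sub_self, mul_eq_zero, mul_eq_zero] at h
    rw [← eval_map_algebraMap, chebyshevW.map]
    exact h.resolve_left (not_or.mpr ⟨sub_ne_zero.mpr (hζ.ne_one hp.one_lt), pow_ne_zero n hζ0⟩)
  have hint : IsIntegral ℤ (ζ + ζ⁻¹) := ⟨_, chebyshevW.monic ℤ n, hroot⟩
  exact eq_of_monic_of_associated (minpoly.monic hint) (chebyshevW.monic ℤ n)
    ((minpoly.prime_of_isIntegrallyClosed hint).irreducible.associated_of_dvd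
      (chebyshevW.irreducible hp) (minpoly.isIntegrallyClosed_dvd hint hroot))

end ChebyshevW

lemma Fpoly_eq_dickson_add_C {r : ℕ} (hr : r.Prime) (hodd : Odd r) {K : Type*} [Field K] {z : ℤ}
    (hz : (z : K) ≠ 0) (s : ℤ) :
    Fpoly r z s K = dickson 1 (z : K) r + C (s : K) := by
  obtain ⟨n, rfl⟩ := hodd
  rw [Fpoly, hpoly_eq_chebyshevW hr, chebyshevW.map, Nat.add_sub_cancel,
    Nat.mul_div_cancel_left n two_pos, dickson_one_two_mul_add_one (mul_inv_cancel₀ hz)]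
  push_cast
  rfl

section DicksonRoots

variable {Γ₀ : Type*} [LinearOrderedCommGroupWithZero Γ₀]

theorem valuation_root_dickson_one_pow {R : Type*} [CommRing R]
    (v : Valuation R Γ₀) (r : ℕ) [Fact r.Prime] (hodd : Odd r) {c : R}
    (hc : v (r : R) ^ r ≤ v c ^ (r - 1)) {x : R} (hx : (dickson 1 1 r + C c).IsRoot x) :
    v x ^ r = v c := by
  have : Nontrivial R := domain_nontrivial v (map_zero v) (map_one v)
  have hr0 : r ≠ 0 := NeZero.ne r
  set p : R[X] := dickson 1 1 r + C c
  have hdegree : p.natDegree = r := by rw [natDegree_add_C, natDegree_dickson 1 1 hr0]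
  have hmonic : p.Monic := by
    refine (monic_dickson 1 1 hr0).add_of_left (degree_C_le.trans_lt ?_)
    rw [← natDegree_pos_iff_degree_pos, natDegree_dickson 1 1 hr0]
    exact Nat.pos_of_ne_zero hr0
  have hcoeff0 : p.coeff 0 = c := by
    rw [coeff_add, coeff_zero_dickson_of_odd 1 1 hodd, coeff_C_zero, zero_add]
  have hcoeff : ∀ i, 0 < i → i < r → ∃ m : ℤ, p.coeff i = m ∧ (r : ℤ) ∣ m := fun i hi hir => by
    refine ⟨(dickson 1 (1 : ℤ) r).coeff i, ?_, prime_dvd_coeff_dickson r hir.ne⟩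
    rw [coeff_add, coeff_C_of_ne_zero hi.ne', add_zero, ← eq_intCast (Int.castRingHom R),
      ← coeff_map, map_dickson, map_one]
  have hNewton := valuation_root_pow_natDegree_eq v hmonic (fun i hi hir => ?_) hx
  · rwa [hdegree, hcoeff0] at hNewton
  rw [hdegree] at hir ⊢
  rw [hcoeff0]
  obtain ⟨m, hm, hdvd⟩ := hcoeff i hi hir
  rw [hm]
  rcases le_total (v c) 1 with h | h
  · calc v (m : R) ^ r ≤ v (r : R) ^ r :=
          pow_le_pow_left₀ zero_le (by simpa using valuation_intCast_le_of_dvd v hdvd) r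
      _ ≤ v c ^ (r - 1) := hc
      _ ≤ v c ^ (r - i) := pow_le_pow_right_of_le_one' h (by omega)
  · exact (pow_le_one₀ zero_le (valuation_intCast_le_one v m)).trans (one_le_pow₀ h)

theorem valuation_root_dickson_pow {L : Type*} [Field L] (v : Valuation L Γ₀) (r : ℕ)
    [Fact r.Prime] (hodd : Odd r) {b s : L} (hb : b ≠ 0)
    (hslope : v (r : L) ^ r ≤ v (s / b ^ r) ^ (r - 1)) {x : L}
    (hx : (dickson 1 (b ^ 2) r + C s).IsRoot x) :
    v x ^ r = v s := by
  have hscale := eval_mul_dickson_sq_mul 1 1 b (x / b) r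
  rw [mul_one, mul_div_cancel₀ x hb] at hscale
  have hroot : (dickson 1 1 r + C (s / b ^ r)).IsRoot (x / b) := by
    rw [IsRoot, eval_add, eval_C] at hx ⊢
    rw [hscale] at hx
    field_simp
    linear_combination hx
  have h := valuation_root_dickson_one_pow v r hodd hslope hroot
  have hvb : v b ^ r ≠ 0 := pow_ne_zero r (v.ne_zero_iff.mpr hb)
  rwa [map_div₀, map_div₀, map_pow, div_pow, div_left_inj' hvb] at h

end DicksonRoots

lemma padic_mulValuation_of_ne_zero {p : ℕ} [Fact p.Prime] {x : ℚ_[p]} (hx : x ≠ 0) :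
    Padic.mulValuation x = WithZero.exp (-x.valuation) :=
  if_neg hx

namespace IsValuationExt

variable {q : ℕ} [Fact q.Prime] {v : AlgebraicClosure ℚ_[q] → ℚ}

open Classical in
/-- The additive function `v` as a multiplicative `Valuation`: `x ≠ 0` has value `exp (-v x)`, and
`0` has value `0` irrespective of the unconstrained `v 0`. -/
noncomputable def valuation (hv : IsValuationExt q v) :
    Valuation (AlgebraicClosure ℚ_[q]) (WithZero (Multiplicative ℚ)) where
  toFun x := if x = 0 then 0 else WithZero.exp (-v x)
  map_zero' := if_pos rfl
  map_one' := by
    have h := hv.2.2 1 one_ne_zero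
    simp_all
  map_mul' x y := by
    by_cases hx : x = 0
    · simp [hx]
    by_cases hy : y = 0
    · simp [hy]
    rw [if_neg hx, if_neg hy, if_neg (mul_ne_zero hx hy), hv.1 x y hx hy, neg_add, WithZero.exp_add]
  map_add_le_max' x y := by
    by_cases hx : x = 0
    · simp [hx]
    by_cases hy : y = 0
    · simp [hy]
    by_cases hxy : x + y = 0
    · simp [hxy]
    rw [if_neg hx, if_neg hy, if_neg hxy, le_max_iff, WithZero.exp_le_exp, WithZero.exp_le_exp,
      neg_le_neg_iff, neg_le_neg_iff, ← min_le_iff]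
    exact hv.2.1 x y hx hy hxy

lemma valuation_of_ne_zero (hv : IsValuationExt q v) {x : AlgebraicClosure ℚ_[q]} (hx : x ≠ 0) :
    hv.valuation x = WithZero.exp (-v x) :=
  if_neg hx

lemma valuation_algebraMap (hv : IsValuationExt q v) {x : ℚ_[q]} (hx : x ≠ 0) :
    hv.valuation (algebraMap ℚ_[q] _ x) = WithZero.exp (-(x.valuation : ℚ)) := by
  rw [hv.valuation_of_ne_zero (by simpa using hx), hv.2.2 x hx]

instance hasExtension (hv : IsValuationExt q v) :
    (Padic.mulValuation (p := q)).HasExtension hv.valuation where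
  val_isEquiv_comap x y := by
    by_cases hx : x = 0
    · simp [hx]
    by_cases hy : y = 0
    · simp [hy]
    rw [Valuation.comap_apply, Valuation.comap_apply, hv.valuation_algebraMap hx,
      hv.valuation_algebraMap hy, padic_mulValuation_of_ne_zero hx,
      padic_mulValuation_of_ne_zero hy, WithZero.exp_le_exp, WithZero.exp_le_exp]
    exact_mod_cast Iff.rfl

theorem valuation_pow_eq_of_aeval_dickson_eq_zero (hv : IsValuationExt q v) (hodd : Odd q)
    {z s : ℚ_[q]} (hz : z ≠ 0) (hs : s ≠ 0)
    (hslope : ((q : ℤ) - 1) * (2 * s.valuation - q * z.valuation) ≤ 2 * q)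
    {y : AlgebraicClosure ℚ_[q]} (hy : aeval y (dickson 1 z q + C s) = 0) :
    hv.valuation y ^ q = hv.valuation (algebraMap ℚ_[q] _ s) := by
  obtain ⟨b, hb⟩ := IsAlgClosed.exists_pow_nat_eq (algebraMap ℚ_[q] (AlgebraicClosure ℚ_[q]) z)
    two_pos
  have hb0 : b ≠ 0 := by
    rintro rfl
    exact hz ((map_eq_zero _).mp (hb.symm.trans (zero_pow two_ne_zero)))
  have hvb : 2 * v b = z.valuation := by
    rw [two_mul, ← hv.1 b b hb0 hb0, ← pow_two, hb, hv.2.2 z hz]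
  refine valuation_root_dickson_pow hv.valuation q hodd hb0 ?_ ?_
  · have hq0 : (q : ℚ_[q]) ≠ 0 := by exact_mod_cast NeZero.ne q
    rw [← map_natCast (algebraMap ℚ_[q] (AlgebraicClosure ℚ_[q])) q, map_div₀, map_pow,
      hv.valuation_algebraMap hq0, hv.valuation_algebraMap hs, hv.valuation_of_ne_zero hb0,
      Padic.valuation_p, ← WithZero.exp_nsmul, ← WithZero.exp_nsmul, ← WithZero.exp_sub,
      ← WithZero.exp_nsmul, WithZero.exp_le_exp]
    simp only [nsmul_eq_mul, Nat.cast_sub NeZero.one_le]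
    have hslope' : ((q : ℚ) - 1) * (2 * s.valuation - q * z.valuation) ≤ 2 * q := by
      exact_mod_cast hslope
    push_cast
    rw [← hvb] at hslope'
    linarith
  · rw [hb, IsRoot, ← map_dickson, ← map_C, ← Polynomial.map_add, eval_map_algebraMap, hy]

end IsValuationExt

/- `hslope` places `(1, 1)` on or above the segment from `(0, v(s) - r v(z) / 2)` to `(r, 0)`, which
is the Newton polygon of the rescaled polynomial `D_r(X, 1) + s / z ^ (r / 2)`. -/
theorem stmt_4_general (r : ℕ) [hr : Fact r.Prime] (hodd : Odd r) (z s : ℤ) (hz0 : z ≠ 0)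
    (hs : ¬ (r : ℤ) ∣ (s : ℚ_[r]).valuation)
    (hslope : ((r : ℤ) - 1) * (2 * (s : ℚ_[r]).valuation - r * (z : ℚ_[r]).valuation) ≤ 2 * r)
    (v : AlgebraicClosure ℚ_[r] → ℚ) (hv : IsValuationExt r v)
    (γ : AlgebraicClosure ℚ_[r]) (hγ : aeval γ (Fpoly r z s ℚ_[r]) = 0) :
    (minpoly ℚ_[r] γ).natDegree = r ∧ v γ = (s : ℚ_[r]).valuation / r := by
  have hs0 : (s : ℚ_[r]) ≠ 0 := fun h => hs (by simp [h])
  have hz : (z : ℚ_[r]) ≠ 0 := Int.cast_ne_zero.mpr hz0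
  have hF := Fpoly_eq_dickson_add_C hr.out hodd hz s
  have hdegree : (Fpoly r z s ℚ_[r]).natDegree = r := by
    rw [hF, natDegree_add_C, natDegree_dickson 1 _ hr.out.ne_zero]
  have hroots : ∀ y : AlgebraicClosure ℚ_[r], aeval y (Fpoly r z s ℚ_[r]) = 0 →
      hv.valuation y ^ r = hv.valuation (algebraMap ℚ_[r] _ s) := fun y hy =>
    hv.valuation_pow_eq_of_aeval_dickson_eq_zero hodd hz hs0 hslope (hF ▸ hy)
  constructor
  · have hF0 : Fpoly r z s ℚ_[r] ≠ 0 := ne_zero_of_natDegree_gt (hdegree ▸ hr.out.pos)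
    have hcoprime : IsCoprime (r : ℤ) (WithZero.log (Padic.mulValuation (s : ℚ_[r]))) := by
      rw [padic_mulValuation_of_ne_zero hs0, WithZero.log_exp]
      exact ((Nat.prime_iff_prime_int.mp hr.out).coprime_iff_not_dvd.mpr hs).neg_right
    exact natDegree_minpoly_eq_of_valuation_roots Padic.mulValuation hv.valuation hdegree hF0
      (IsAlgClosed.splits _) hcoprime hroots hγ
  · have hr0 : (r : ℚ) ≠ 0 := by exact_mod_cast hr.out.ne_zero
    have h := hroots γ hγ
    rw [hv.valuation_algebraMap hs0] at h
    have hγ0 : γ ≠ 0 := hv.valuation.ne_zero_iff.mp <|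
      (pow_ne_zero_iff hr.out.ne_zero).mp (h ▸ WithZero.exp_ne_zero)
    rw [hv.valuation_of_ne_zero hγ0, ← WithZero.exp_nsmul, WithZero.exp_inj, nsmul_eq_mul] at h
    rw [eq_div_iff hr0]
    linarith

/-- **Lemma 5.13.** Let `r ≥ 5` be a prime and `z, s` nonzero integers with `v_r(z) = 1`
and `v_r(s) = (r+1)/2`.  Then for any root `γ` of `F(x)` in an algebraic closure of `ℚ_r`,
the extension `ℚ_r(γ)/ℚ_r` has degree `r` and is totally ramified: `[ℚ_r(γ) : ℚ_r] = r`
and `0 < v_r(γ) < 1` (which forces ramification index `r`). -/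
theorem stmt_4 (r : ℕ) [Fact r.Prime] (hr : 5 ≤ r)
    (z s : ℤ) (hz0 : z ≠ 0) (hs0 : s ≠ 0)
    (hz : ((z : ℚ_[r])).valuation = 1)
    (hs : 2 * ((s : ℚ_[r])).valuation = (r : ℤ) + 1)
    (v : AlgebraicClosure ℚ_[r] → ℚ) (hv : IsValuationExt r v)
    (γ : AlgebraicClosure ℚ_[r]) (hγ : aeval γ (Fpoly r z s ℚ_[r]) = 0) :
    (minpoly ℚ_[r] γ).natDegree = r ∧ 0 < v γ ∧ v γ < 1 := by
  have hodd : Odd r := (Fact.out : r.Prime).odd_of_ne_two (by omega)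
  have hdvd : ¬ (r : ℤ) ∣ (s : ℚ_[r]).valuation := fun h => by
    have := Int.le_of_dvd (by omega) h
    omega
  obtain ⟨hdegree, hvγ⟩ := stmt_4_general r hodd z s hz0 hdvd (by rw [hz, hs]; linarith) v hv γ hγ
  have hs' : 2 * ((s : ℚ_[r]).valuation : ℚ) = r + 1 := by exact_mod_cast hs
  have hr' : (5 : ℚ) ≤ r := by exact_mod_cast hr
  rw [hvγ, div_lt_one (by linarith)]
  exact ⟨hdegree, div_pos (by linarith) (by linarith), by linarith⟩
end

section
/- Let r ≥ 5 be a prime and let z, s be nonzero integers with v_r(z) = 1 and v_r(s) = (r+1)/2. Set Δ = s² − 4z^r and fix a square root √Δ of Δ in an algebraic closure of ℚ_r; then v_r(Δ) = r, so π := √Δ / r^((r−1)/2) satisfies v_r(π) = 1/2 and is a uniformizer of the ramified quadratic extension ℚ_r(√Δ)/ℚ_r. Set u := −(s + √Δ)/(2π^r). Then v_r(u) = 0 and v_r(u^r − u) = 1/2; equivalently, in the valuation of ℚ_r(√Δ) normalized so that π has valuation 1, u is a unit and u^r − u is a uniformizer. -/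
/-!
Write `r = 2m + 1`. Then `π² = Δ / r^(2m)` lies in `ℚ_r`, so in `u = a + b` with
`a = -r^m / (2π^(2m))` and `b = -s / (2π^r)` the term `a` is a unit of `ℤ_r`, while `b` has
valuation `1/2`. Modulo `r` the Frobenius is additive and fixes `a`, whence
`u^r - u ≡ b^r - b`, which has the valuation of `b`.
-/

section AddValuation

variable {R Γ₀ : Type*} [CommRing R] [LinearOrderedAddCommMonoidWithTop Γ₀]
  (v : AddValuation R Γ₀)

theorem addValuation_natCast_nonneg (n : ℕ) : 0 ≤ v n := by
  induction n with
  | zero => rw [Nat.cast_zero, v.map_zero]; exact le_top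
  | succ n ih => rw [Nat.cast_succ]; exact v.map_le_add ih v.map_one.ge

theorem addValuation_natCast_le_add_pow_prime_sub {p : ℕ} (hp : p.Prime) {x y : R}
    (hx : 0 ≤ v x) (hy : 0 ≤ v y) : v p ≤ v ((x + y) ^ p - (x ^ p + y ^ p)) := by
  rw [add_pow_prime_eq' hp, add_sub_cancel_left, v.map_mul]
  refine le_add_of_nonneg_right (v.map_le_sum fun k _ ↦ ?_)
  simp only [v.map_mul, v.map_pow]
  exact add_nonneg (add_nonneg (nsmul_nonneg hx _) (nsmul_nonneg hy _))
    (addValuation_natCast_nonneg v _)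

theorem addValuation_add_pow_prime_sub_self {p : ℕ} (hp : p.Prime) {a b : R} (ha : 0 ≤ v a)
    (hap : v p ≤ v (a ^ p - a)) (hb : 0 < v b) (hbp : v b < v p) :
    v ((a + b) ^ p - (a + b)) = v b := by
  have hbpow : v b < v (b ^ p) := calc
    v b < v b + v b := by
      simpa only [add_zero] using (add_lt_add_iff_right_of_ne_top hbp.ne_top).2 hb
    _ = 2 • v b := (two_nsmul _).symm
    _ ≤ p • v b := nsmul_le_nsmul_left hb.le hp.two_le
    _ = v (b ^ p) := (v.map_pow b p).symm
  have hcross : v b < v ((a + b) ^ p - (a ^ p + b ^ p)) :=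
    hbp.trans_le (addValuation_natCast_le_add_pow_prime_sub v hp ha hb.le)
  have expansion : (a + b) ^ p - (a + b) =
      -b + ((a ^ p - a) + b ^ p + ((a + b) ^ p - (a ^ p + b ^ p))) := by ring
  have hrest := v.map_lt_add (v.map_lt_add (hbp.trans_le hap) hbpow) hcross
  rw [expansion, v.map_add_eq_of_lt_left (by rwa [v.map_neg]), v.map_neg]

theorem addValuation_sq_sub_four_mul_pow (h2 : v 2 = 0) {s z : R} {n : ℕ}
    (h : n • v z < 2 • v s) : v (s ^ 2 - 4 * z ^ n) = n • v z := by
  have hz : v (4 * z ^ n) = n • v z := by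
    rw [show (4 : R) = 2 ^ 2 by norm_num, v.map_mul, v.map_pow, v.map_pow, h2, nsmul_zero,
      zero_add]
  rw [v.map_sub_eq_of_lt_right (by rwa [hz, v.map_pow]), hz]

theorem addValuation_eq_div_of_pow_eq (w : AddValuation R (WithTop ℚ)) {x : R} {n : ℕ}
    (hn : n ≠ 0) {c : ℚ} (h : w (x ^ n) = c) : w x = (c / n : ℚ) := by
  rw [w.map_pow] at h
  cases hx : w x with
  | top =>
    obtain ⟨k, rfl⟩ := Nat.exists_eq_succ_of_ne_zero hn
    simp [hx, succ_nsmul] at h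
  | coe q =>
    rw [hx] at h
    norm_cast at h ⊢
    rw [← h, nsmul_eq_mul, mul_div_cancel_left₀ q (by exact_mod_cast hn)]

end AddValuation

theorem padicInt_natCast_dvd_pow_sub_self {p : ℕ} [Fact p.Prime] (x : ℤ_[p]) :
    (p : ℤ_[p]) ∣ x ^ p - x := by
  rw [← Ideal.mem_span_singleton, ← PadicInt.maximalIdeal_eq_span_p, ← PadicInt.ker_toZMod,
    RingHom.mem_ker, map_sub, map_pow, ZMod.pow_card, sub_self]

/-- The additive valuation `w` on a `ℚ_[p]`-algebra extends the `p`-adic valuation of `ℚ_[p]`,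
normalized by `w p = 1`. -/
def ExtendsPadicValuation (p : ℕ) [Fact p.Prime] {L : Type*} [CommRing L] [Algebra ℚ_[p] L]
    (w : AddValuation L (WithTop ℚ)) : Prop :=
  ∀ x : ℚ_[p], x ≠ 0 → w (algebraMap ℚ_[p] L x) = (x.valuation : ℚ)

namespace ExtendsPadicValuation

section CommRing

variable {p : ℕ} [Fact p.Prime] {L : Type*} [CommRing L] [Algebra ℚ_[p] L]
  {w : AddValuation L (WithTop ℚ)} (hw : ExtendsPadicValuation p w)

include hw

theorem map_algebraMap_of_valuation_ne_zero {x : ℚ_[p]} (hx : x.valuation ≠ 0) :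
    w (algebraMap ℚ_[p] L x) = (x.valuation : ℚ) :=
  hw x fun h ↦ hx (h ▸ Padic.valuation_zero)

theorem map_prime : w p = (1 : ℚ) := by
  simpa using hw.map_algebraMap_of_valuation_ne_zero (x := p) (by simp)

theorem map_two (hp : p ≠ 2) : w 2 = 0 := by
  simpa only [map_ofNat, Padic.valuation_ofNat, padicValNat_primes hp, Nat.cast_zero,
    Int.cast_zero, WithTop.coe_zero] using hw 2 two_ne_zero

theorem zero_le_map_algebraMap_iff {x : ℚ_[p]} : 0 ≤ w (algebraMap ℚ_[p] L x) ↔ ‖x‖ ≤ 1 := by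
  obtain rfl | hx := eq_or_ne x 0
  · simp
  · rw [hw x hx, Padic.norm_le_one_iff_val_nonneg]
    norm_cast

theorem map_prime_le_pow_sub_self {x : ℚ_[p]} (hx : 0 ≤ w (algebraMap ℚ_[p] L x)) :
    w p ≤ w (algebraMap ℚ_[p] L x ^ p - algebraMap ℚ_[p] L x) := by
  obtain ⟨x, rfl⟩ : ∃ y : ℤ_[p], (y : ℚ_[p]) = x := ⟨⟨x, hw.zero_le_map_algebraMap_iff.1 hx⟩, rfl⟩
  obtain ⟨y, hy⟩ := padicInt_natCast_dvd_pow_sub_self x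
  have hy' : (x : ℚ_[p]) ^ p - x = p * y := by exact_mod_cast congrArg Subtype.val hy
  rw [← map_pow, ← map_sub, hy', map_mul, map_natCast (algebraMap ℚ_[p] L), w.map_mul]
  exact le_add_of_nonneg_right (hw.zero_le_map_algebraMap_iff.2 y.norm_le_one)

theorem map_add_pow_prime_sub_self {x : ℚ_[p]} {b : L} (hx : 0 ≤ w (algebraMap ℚ_[p] L x))
    (hb : 0 < w b) (hbp : w b < w p) :
    w ((algebraMap ℚ_[p] L x + b) ^ p - (algebraMap ℚ_[p] L x + b)) = w b :=
  addValuation_add_pow_prime_sub_self w Fact.out hx (hw.map_prime_le_pow_sub_self hx) hb hbp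

theorem map_sq_sub_four_mul_pow {z s : ℚ_[p]} {n : ℕ} (hp : p ≠ 2) (hz : z.valuation = 1)
    (hs : n < 2 * s.valuation) : w (algebraMap ℚ_[p] L (s ^ 2 - 4 * z ^ n)) = (n : ℚ) := by
  have hwz := hw.map_algebraMap_of_valuation_ne_zero (x := z) (by lia)
  have hws := hw.map_algebraMap_of_valuation_ne_zero (x := s) (by lia)
  have hlt : n • w (algebraMap ℚ_[p] L z) < 2 • w (algebraMap ℚ_[p] L s) := by
    rw [hwz, hws, hz]
    norm_cast
    rw [nsmul_eq_mul, nsmul_eq_mul, mul_one]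
    exact_mod_cast hs
  simp only [map_sub, map_mul, map_pow, map_ofNat]
  rw [addValuation_sq_sub_four_mul_pow w (hw.map_two hp) hlt, hwz, hz]
  norm_cast
  rw [nsmul_eq_mul, mul_one]

end CommRing

section Field

variable {p : ℕ} [Fact p.Prime] {L : Type*} [Field L] [Algebra ℚ_[p] L]
  {w : AddValuation L (WithTop ℚ)} (hw : ExtendsPadicValuation p w)

include hw

theorem map_div_prime_pow_of_sq {x : L} {n : ℕ} (hn : Odd n) (hx : w (x ^ 2) = (n : ℚ)) :
    w (x / p ^ ((n - 1) / 2)) = (1 / 2 : ℚ) := by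
  obtain ⟨m, rfl⟩ := hn
  have hwx : w x = ((2 * m + 1 : ℕ) / 2 : ℚ) := addValuation_eq_div_of_pow_eq w two_ne_zero hx
  rw [w.map_div, w.map_pow, hwx, hw.map_prime, show (2 * m + 1 - 1) / 2 = m by lia]
  norm_cast
  push_cast [nsmul_eq_mul]
  ring

theorem exists_neg_add_div_eq_algebraMap_add {d s : ℚ_[p]} {π : L} {m n : ℕ} (hp : p ≠ 2)
    (hn : n = 2 * m + 1) (hd : π ^ 2 = algebraMap ℚ_[p] L d) (hwπ : w π = (1 / 2 : ℚ))
    (hs : 2 * s.valuation = n + 1) :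
    ∃ (x : ℚ_[p]) (b : L),
      -(algebraMap ℚ_[p] L s + p ^ m * π) / (2 * π ^ n) = algebraMap ℚ_[p] L x + b ∧
      w (algebraMap ℚ_[p] L x) = 0 ∧ w b = (1 / 2 : ℚ) := by
  have hπ : π ≠ 0 := w.ne_top_iff.1 (hwπ ▸ WithTop.coe_ne_top)
  have hw2 : w 2 = 0 := hw.map_two hp
  have hx : algebraMap ℚ_[p] L (-(p ^ m / (2 * d ^ m))) = -(p ^ m / (2 * π ^ (2 * m))) := by
    simp only [map_neg, map_div₀, map_mul, map_pow, map_natCast, map_ofNat, ← hd, pow_mul]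
  refine ⟨-(p ^ m / (2 * d ^ m)), -(algebraMap ℚ_[p] L s / (2 * π ^ n)), ?_, ?_, ?_⟩
  · rw [hx, show π ^ n = π ^ (2 * m) * π by rw [← pow_succ, ← hn]]
    field_simp
    ring
  · rw [hx, w.map_neg, w.map_div, w.map_mul, w.map_pow, w.map_pow, hw.map_prime, hw2, hwπ]
    norm_cast
    push_cast [nsmul_eq_mul]
    ring
  · have hs' : (2 * s.valuation : ℚ) = n + 1 := mod_cast hs
    rw [w.map_neg, w.map_div, w.map_mul, w.map_pow, hw2, hwπ,
      hw.map_algebraMap_of_valuation_ne_zero (by lia), zero_add]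
    norm_cast
    rw [nsmul_eq_mul]
    linear_combination hs' / 2

end Field

end ExtendsPadicValuation

theorem stmt_7_general {r : ℕ} [Fact r.Prime] {L : Type*} [Field L] [Algebra ℚ_[r] L]
    {w : AddValuation L (WithTop ℚ)} (hw : ExtendsPadicValuation r w)
    {z s : ℚ_[r]} (hz : z.valuation = 1) (hs : 2 * s.valuation = (r : ℤ) + 1)
    {sqrtD π u : L} (hsq : sqrtD ^ 2 = algebraMap ℚ_[r] L (s ^ 2 - 4 * z ^ r))
    (hπ : π = sqrtD / (r : L) ^ ((r - 1) / 2))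
    (hu : u = -(algebraMap ℚ_[r] L s + sqrtD) / (2 * π ^ r)) :
    w (algebraMap ℚ_[r] L (s ^ 2 - 4 * z ^ r)) = (r : ℚ) ∧
      w π = (1 / 2 : ℚ) ∧ w u = (0 : ℚ) ∧ w (u ^ r - u) = (1 / 2 : ℚ) := by
  obtain ⟨m, hm⟩ : ∃ m, r = 2 * m + 1 := ⟨(r - 1) / 2, by lia⟩
  have hr2 : r ≠ 2 := by lia
  have hΔ := hw.map_sq_sub_four_mul_pow (z := z) (s := s) (n := r) hr2 hz (by lia)
  have hwπ : w π = (1 / 2 : ℚ) := hπ ▸ hw.map_div_prime_pow_of_sq ⟨m, hm⟩ (hsq ▸ hΔ)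
  have hr0 : (r : L) ≠ 0 := w.ne_top_iff.1 (hw.map_prime ▸ WithTop.coe_ne_top)
  rw [show (r - 1) / 2 = m by lia] at hπ
  have hπsq : π ^ 2 = algebraMap ℚ_[r] L ((s ^ 2 - 4 * z ^ r) / (r ^ m) ^ 2) := by
    rw [hπ, div_pow, hsq, map_div₀, map_pow, map_pow, map_natCast]
  have hsqrtD : sqrtD = r ^ m * π := by rw [hπ, mul_div_cancel₀ _ (pow_ne_zero m hr0)]
  obtain ⟨x, b, hxb, hx, hb⟩ := hw.exists_neg_add_div_eq_algebraMap_add hr2 hm hπsq hwπ hs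
  rw [← hsqrtD, ← hu] at hxb
  have hb0 : 0 < w b := by rw [hb]; norm_cast; norm_num
  have hbr : w b < w r := by rw [hb, hw.map_prime]; norm_cast; norm_num
  refine ⟨hΔ, hwπ, ?_, ?_⟩
  · rw [hxb, w.map_add_eq_of_lt_left (hx ▸ hb0), hx, WithTop.coe_zero]
  · rw [hxb, hw.map_add_pow_prime_sub_self hx.ge hb0 hbr, hb]

namespace IsValuationExt

variable {q : ℕ} [Fact q.Prime] {v : AlgebraicClosure ℚ_[q] → ℚ} (hv : IsValuationExt q v)

open Classical in
/-- The additive valuation with values in `WithTop ℚ` given by `v` away from `0`; it replaces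
the junk value `v 0` by `⊤`. -/
noncomputable def addValuation : AddValuation (AlgebraicClosure ℚ_[q]) (WithTop ℚ) :=
  AddValuation.of (fun x ↦ if x = 0 then ⊤ else (v x : WithTop ℚ)) (if_pos rfl)
    (by
      have h11 := hv.1 1 1 one_ne_zero one_ne_zero
      rw [mul_one, left_eq_add] at h11
      rw [if_neg one_ne_zero, h11, WithTop.coe_zero])
    (fun x y ↦ by
      by_cases hx : x = 0
      · simp [hx]
      by_cases hy : y = 0
      · simp [hy]
      by_cases hxy : x + y = 0
      · simp [hxy]
      simpa only [if_neg hx, if_neg hy, if_neg hxy] using mod_cast hv.2.1 x y hx hy hxy)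
    (fun x y ↦ by
      by_cases hx : x = 0
      · simp [hx]
      by_cases hy : y = 0
      · simp [hy]
      simpa only [if_neg hx, if_neg hy, if_neg (mul_ne_zero hx hy)] using
        mod_cast hv.1 x y hx hy)

theorem addValuation_apply {x : AlgebraicClosure ℚ_[q]} (hx : x ≠ 0) :
    hv.addValuation x = v x :=
  if_neg hx

theorem eq_of_addValuation_eq {x : AlgebraicClosure ℚ_[q]} {c : ℚ}
    (hx : hv.addValuation x = c) : v x = c := by
  have hx0 : x ≠ 0 := hv.addValuation.ne_top_iff.1 (hx ▸ WithTop.coe_ne_top)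
  exact mod_cast (hv.addValuation_apply hx0).symm.trans hx

theorem extendsPadicValuation : ExtendsPadicValuation q hv.addValuation := fun x hx ↦ by
  rw [hv.addValuation_apply ((map_ne_zero _).2 hx), hv.2.2 x hx]

end IsValuationExt

/-- **Lemma 5.17** (together with the surrounding facts).  Let `r ≥ 5` be a prime and `z, s`
nonzero integers with `v_r(z) = 1` and `v_r(s) = (r+1)/2`.  Let `Δ = s² - 4z^r` and `√Δ` a
square root of `Δ` in an algebraic closure of `ℚ_r`.  Then `v_r(Δ) = r`, the element
`π = √Δ / r^((r-1)/2)` satisfies `v_r(π) = 1/2` (so it is a uniformizer of the ramified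
quadratic extension `ℚ_r(√Δ)/ℚ_r`), and `u = -(s + √Δ)/(2π^r)` satisfies `v_r(u) = 0` and
`v_r(u^r - u) = 1/2` (i.e. `u` is a unit and `u^r - u` a uniformizer of `ℚ_r(√Δ)`). -/
theorem stmt_7 (r : ℕ) [Fact r.Prime] (hr : 5 ≤ r)
    (z s : ℤ) (hz0 : z ≠ 0) (hs0 : s ≠ 0)
    (hz : ((z : ℚ_[r])).valuation = 1)
    (hs : 2 * ((s : ℚ_[r])).valuation = (r : ℤ) + 1)
    (v : AlgebraicClosure ℚ_[r] → ℚ) (hv : IsValuationExt r v)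
    (sqrtD π u : AlgebraicClosure ℚ_[r])
    (hsq : sqrtD ^ 2 = ((s ^ 2 - 4 * z ^ r : ℤ) : AlgebraicClosure ℚ_[r]))
    (hπ : π = sqrtD / (r : AlgebraicClosure ℚ_[r]) ^ ((r - 1) / 2))
    (hu : u = -(((s : ℤ) : AlgebraicClosure ℚ_[r]) + sqrtD) / (2 * π ^ r)) :
    v ((s ^ 2 - 4 * z ^ r : ℤ) : AlgebraicClosure ℚ_[r]) = (r : ℚ) ∧
    v π = 1 / 2 ∧ v u = 0 ∧ v (u ^ r - u) = 1 / 2 := by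
  simp only [← map_intCast (algebraMap ℚ_[r] (AlgebraicClosure ℚ_[r]))] at hsq hu ⊢
  simp only [Int.cast_sub, Int.cast_mul, Int.cast_pow, Int.cast_ofNat] at hsq ⊢
  obtain ⟨hvΔ, hvπ, hvu, hvur⟩ := stmt_7_general hv.extendsPadicValuation hz hs hsq hπ hu
  exact ⟨hv.eq_of_addValuation_eq hvΔ, hv.eq_of_addValuation_eq hvπ, hv.eq_of_addValuation_eq hvu,
    hv.eq_of_addValuation_eq hvur⟩
end
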